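/- Let K ⊆ ℝⁿ be a convex body and let a, b > 0 satisfy b < 2a. Then (∫_K e^{−b‖x‖²} dx) · (∫_K e^{−(2a−b)‖x‖²} dx) ≤ (a² / (b(2a − b)))^{n+1} · (∫_K e^{−a‖x‖²} dx)². -/

import Mathlib

open MeasureTheory Real Set Metric

lemma bm_compact (A B C : Set ℝ) (hA : IsCompact A) (hB : IsCompact B) (hAn : A.Nonempty)
    (hBn : B.Nonempty) (h : ∀ x ∈ A, ∀ y ∈ B, x + y ∈ C) :
    volume A + volume B ≤ volume C := by
  obtain ⟨p, hp, hpm⟩ := hA.exists_isGreatest hAn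
  obtain ⟨q, hq, hqm⟩ := hB.exists_isLeast hBn
  have e1 : volume ((fun x => x + (-q)) ⁻¹' A) = volume A := measure_preimage_add_right _ _ _
  have e2 : volume ((fun x => x + (-p)) ⁻¹' B) = volume B := measure_preimage_add_right _ _ _
  rw [← e1, ← e2, ← measure_union₀]
  · apply measure_mono
    rintro z (hz | hz)
    · have := h _ hz _ hq
      simpa using this
    · have := h _ hp _ hz
      simpa using this
  · exact (hB.measurableSet.preimage (by fun_prop)).nullMeasurableSet
  · have : ((fun x => x + (-q)) ⁻¹' A) ∩ ((fun x => x + (-p)) ⁻¹' B) ⊆ {p + q} := by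
      rintro z ⟨h1, h2⟩
      have := hpm h1
      have := hqm h2
      simp only [mem_singleton_iff]
      linarith
    exact measure_mono_null this (by simp)

lemma bm_meas (A B C : Set ℝ) (hA : MeasurableSet A) (hB : MeasurableSet B) (hAn : A.Nonempty)
    (hBn : B.Nonempty) (h : ∀ x ∈ A, ∀ y ∈ B, (x + y) / 2 ∈ C) :
    volume A + volume B ≤ 2 * volume C := by
  have hC : volume ((fun x => (2⁻¹ : ℝ) * x) ⁻¹' C) = 2 * volume C := by
    rw [Real.volume_preimage_mul_left (by norm_num)]
    simp
  rw [← hC, hA.measure_eq_iSup_isCompact, hB.measure_eq_iSup_isCompact]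
  obtain ⟨a, ha⟩ := hAn
  obtain ⟨b, hb⟩ := hBn
  have key : ∀ K ⊆ A, IsCompact K → ∀ L ⊆ B, IsCompact L →
      volume K + volume L ≤ volume ((fun x => (2⁻¹ : ℝ) * x) ⁻¹' C) := by
    intro K hKA hK L hLB hL
    refine le_trans (add_le_add (measure_mono (subset_insert a K)) (measure_mono (subset_insert b L)))
      (bm_compact _ _ _ (hK.insert a) (hL.insert b) (insert_nonempty _ _) (insert_nonempty _ _) ?_)
    intro x hx y hy
    have := h x (insert_subset ha hKA hx) y (insert_subset hb hLB hy)
    simpa [div_eq_inv_mul] using this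
  simp only [iSup_and']
  refine ENNReal.biSup_add_biSup_le' (p := fun K : Set ℝ => K ⊆ A ∧ IsCompact K)
    (q := fun K : Set ℝ => K ⊆ B ∧ IsCompact K)
    ⟨∅, empty_subset _, isCompact_empty⟩ ⟨∅, empty_subset _, isCompact_empty⟩ ?_
  rintro K ⟨h1, h2⟩ L ⟨h3, h4⟩
  exact key K h1 h2 L h3 h4

/-- normalized one-dimensional case -/
lemma pl_norm (f g h : ℝ → ℝ) (hf : Measurable f) (hg : Measurable g) (hh : Measurable h)
    (f0 : ∀ x, 0 ≤ f x) (g0 : ∀ x, 0 ≤ g x) (h0 : ∀ x, 0 ≤ h x)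
    (f1 : ∀ x, f x ≤ 1) (g1 : ∀ x, g x ≤ 1)
    (fs : ∀ t < 1, ∃ x, t < f x) (gs : ∀ t < 1, ∃ x, t < g x)
    (H : ∀ x y, f x * g y ≤ h ((x + y) / 2) ^ 2) :
    (∫⁻ x, ENNReal.ofReal (f x)) + (∫⁻ x, ENNReal.ofReal (g x)) ≤
      2 * ∫⁻ x, ENNReal.ofReal (h x) := by
  rw [lintegral_eq_lintegral_meas_lt _ (.of_forall f0) hf.aemeasurable,
    lintegral_eq_lintegral_meas_lt _ (.of_forall g0) hg.aemeasurable,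
    lintegral_eq_lintegral_meas_lt _ (.of_forall h0) hh.aemeasurable]
  have anti : ∀ u : ℝ → ℝ, Measurable (fun t : ℝ => volume {a | t < u a}) := by
    intro u
    apply Antitone.measurable
    intro s t hst
    exact measure_mono fun x hx => lt_of_le_of_lt hst hx
  rw [← lintegral_add_left (anti f), ← lintegral_const_mul _ (anti h)]
  refine setLIntegral_mono' measurableSet_Ioi ?_
  intro t ht
  have ht : 0 < t := ht
  by_cases h1 : t < 1
  · refine bm_meas _ _ _ (measurableSet_lt measurable_const hf) (measurableSet_lt measurable_const hg)
      (fs t h1) (gs t h1) ?_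
    intro x hx y hy
    have hx : t < f x := hx
    have hy : t < g y := hy
    show t < h ((x + y) / 2)
    have := H x y
    refine lt_of_pow_lt_pow_left₀ 2 (h0 _) ?_
    nlinarith
  · have e1 : {a | t < f a} = ∅ := by
      ext x; simp; linarith [f1 x]
    have e2 : {a | t < g a} = ∅ := by
      ext x; simp; linarith [g1 x]
    simp [e1, e2]

lemma ennreal_amgm (a b c : ENNReal) (h : a + b ≤ 2 * c) : a * b ≤ c ^ 2 := by
  rcases eq_or_ne c ⊤ with rfl | hc
  · simp
  have hab : a + b ≠ ⊤ := ne_top_of_le_ne_top (ENNReal.mul_ne_top (by simp) hc) h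
  have ha : a ≠ ⊤ := fun h => hab (by simp [h])
  have hb : b ≠ ⊤ := fun h => hab (by simp [h])
  lift a to NNReal using ha
  lift b to NNReal using hb
  lift c to NNReal using hc
  norm_cast at *
  have : (a : ℝ) + b ≤ 2 * c := by exact_mod_cast h
  have : (a : ℝ) * b ≤ c ^ 2 := by
    nlinarith [sq_nonneg ((a : ℝ) - b), a.2, b.2, c.2, mul_self_le_mul_self (add_nonneg a.2 b.2) this]
  exact_mod_cast this

lemma pl_bdd (f g h : ℝ → ℝ) (hf : Measurable f) (hg : Measurable g) (hh : Measurable h)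
    (f0 : ∀ x, 0 ≤ f x) (g0 : ∀ x, 0 ≤ g x) (h0 : ∀ x, 0 ≤ h x)
    (N : ℝ) (f1 : ∀ x, f x ≤ N) (g1 : ∀ x, g x ≤ N)
    (H : ∀ x y, f x * g y ≤ h ((x + y) / 2) ^ 2) :
    (∫⁻ x, ENNReal.ofReal (f x)) * (∫⁻ x, ENNReal.ofReal (g x)) ≤
      (∫⁻ x, ENNReal.ofReal (h x)) ^ 2 := by
  have bf : BddAbove (range f) := ⟨N, by rintro _ ⟨x, rfl⟩; exact f1 x⟩
  have bg : BddAbove (range g) := ⟨N, by rintro _ ⟨x, rfl⟩; exact g1 x⟩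
  have lf : ∀ x, f x ≤ ⨆ x, f x := le_ciSup bf
  have lg : ∀ x, g x ≤ ⨆ x, g x := le_ciSup bg
  have ef : ∀ t < ⨆ x, f x, ∃ x, t < f x := fun t ht => exists_lt_of_lt_ciSup ht
  have eg : ∀ t < ⨆ x, g x, ∃ x, t < g x := fun t ht => exists_lt_of_lt_ciSup ht
  generalize (⨆ x, f x) = P at *
  generalize (⨆ x, g x) = Q at *
  rcases (le_trans (f0 0) (lf 0)).eq_or_lt with hP | hP
  · have : ∀ x, f x = 0 := fun x => le_antisymm (hP ▸ lf x) (f0 x)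
    simp [this]
  rcases (le_trans (g0 0) (lg 0)).eq_or_lt with hQ | hQ
  · have : ∀ x, g x = 0 := fun x => le_antisymm (hQ ▸ lg x) (g0 x)
    simp [this]
  set S := √(P * Q) with hS
  have S0 : 0 < S := by positivity
  have S2 : S ^ 2 = P * Q := Real.sq_sqrt (by positivity)
  have main := ennreal_amgm _ _ _ (pl_norm (fun x => P⁻¹ * f x) (fun x => Q⁻¹ * g x) (fun x => S⁻¹ * h x)
    (by fun_prop) (by fun_prop) (by fun_prop)
    (fun x => mul_nonneg (by positivity) (f0 x)) (fun x => mul_nonneg (by positivity) (g0 x))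
    (fun x => mul_nonneg (by positivity) (h0 x))
    (fun x => by rw [inv_mul_le_iff₀ hP]; simpa using lf x)
    (fun x => by rw [inv_mul_le_iff₀ hQ]; simpa using lg x)
    (fun t ht => by
      obtain ⟨x, hx⟩ := ef (P * t) (by nlinarith)
      exact ⟨x, by rwa [lt_inv_mul_iff₀ hP]⟩)
    (fun t ht => by
      obtain ⟨x, hx⟩ := eg (Q * t) (by nlinarith)
      exact ⟨x, by rwa [lt_inv_mul_iff₀ hQ]⟩)
    (fun x y => by
      have := H x y
      calc P⁻¹ * f x * (Q⁻¹ * g y) = (P * Q)⁻¹ * (f x * g y) := by rw [mul_inv]; ring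
        _ ≤ (P * Q)⁻¹ * h ((x + y) / 2) ^ 2 := by gcongr
        _ = _ := by rw [mul_pow, inv_pow, S2]))
  have sc : ∀ (R : ℝ) (u : ℝ → ℝ), 0 < R → Measurable u → ∫⁻ x, ENNReal.ofReal (u x) =
      ENNReal.ofReal R * ∫⁻ x, ENNReal.ofReal (R⁻¹ * u x) := by
    intro R u hR hu
    rw [← lintegral_const_mul _ (by fun_prop)]
    congr 1; ext x
    rw [← ENNReal.ofReal_mul hR.le]
    congr 1; field_simp
  rw [sc P f hP hf, sc Q g hQ hg, sc S h S0 hh, mul_pow, ← ENNReal.ofReal_pow S0.le, S2,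
    ENNReal.ofReal_mul hP.le, mul_mul_mul_comm]
  gcongr

lemma lint_trunc (f : ℝ → ENNReal) (hf : Measurable f) :
    ∫⁻ x, f x = ⨆ N : ℕ, ∫⁻ x, min (f x) N := by
  rw [← lintegral_iSup (fun N => by fun_prop)]
  · congr 1; ext x
    have := ENNReal.iSup_natCast
    rw [← inf_iSup_eq, this]; simp
  · intro m n hmn x
    simp only
    gcongr

lemma pl_one (f g h : ℝ → ENNReal) (hf : Measurable f) (hg : Measurable g) (hh : Measurable h)
    (H : ∀ x y, f x * g y ≤ h ((x + y) / 2) ^ 2) :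
    (∫⁻ x, f x) * (∫⁻ x, g x) ≤ (∫⁻ x, h x) ^ 2 := by
  have key : ∀ N : ℕ, (∫⁻ x, min (f x) N) * (∫⁻ x, min (g x) N) ≤ (∫⁻ x, h x) ^ 2 := by
    intro N
    have conv : ∀ (u : ENNReal), min u N ≠ ⊤ := fun u =>
      ne_top_of_le_ne_top (ENNReal.natCast_ne_top N) (min_le_right _ _)
    have bd : ∀ (u : ENNReal), (min u (N : ENNReal)).toReal ≤ N := fun u => by
      simpa using ENNReal.toReal_mono (ENNReal.natCast_ne_top N) (min_le_right u (N : ENNReal))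
    have := pl_bdd (fun x => (min (f x) N).toReal) (fun x => (min (g x) N).toReal)
      (fun x => (min (h x) N).toReal) (by fun_prop) (by fun_prop) (by fun_prop)
      (fun _ => ENNReal.toReal_nonneg) (fun _ => ENNReal.toReal_nonneg)
      (fun _ => ENNReal.toReal_nonneg) N (fun x => bd _) (fun x => bd _) (fun x y => by
        rw [← ENNReal.toReal_mul, ← ENNReal.toReal_pow]
        apply ENNReal.toReal_mono (ENNReal.pow_ne_top (conv _))
        rcases le_total (h ((x + y) / 2)) N with hN | hN
        · rw [min_eq_left hN]
          exact le_trans (mul_le_mul' (min_le_left _ _) (min_le_left _ _)) (H x y)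
        · rw [min_eq_right hN, sq]
          exact mul_le_mul' (min_le_right _ _) (min_le_right _ _))
    simp only [ENNReal.ofReal_toReal (conv _)] at this
    refine this.trans ?_
    gcongr
    exact min_le_left _ _
  rw [lint_trunc f hf, lint_trunc g hg, ENNReal.iSup_mul]
  refine iSup_le fun i => ?_
  rw [ENNReal.mul_iSup]
  refine iSup_le fun j => ?_
  refine le_trans ?_ (key (max i j))
  gcongr
  · exact le_max_left _ _
  · exact le_max_right _ _

lemma pl_pi (n : ℕ) : ∀ (f g h : (Fin n → ℝ) → ENNReal), Measurable f → Measurable g →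
    Measurable h → (∀ x y, f x * g y ≤ h ((2⁻¹ : ℝ) • (x + y)) ^ 2) →
    (∫⁻ x, f x) * (∫⁻ x, g x) ≤ (∫⁻ x, h x) ^ 2 := by
  induction n with
  | zero =>
    intro f g h _ _ _ H
    have e : ∀ u : (Fin 0 → ℝ) → ENNReal, ∫⁻ x, u x = u 0 := by
      intro u
      rw [Measure.volume_pi_eq_dirac 0]; simp
    rw [e, e, e]
    simpa using H 0 0
  | succ n ih =>
    intro f g h hf hg hh H
    let e := MeasurableEquiv.piFinSuccAbove (fun _ : Fin (n + 1) => ℝ) 0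
    have he : ∀ u : (Fin (n + 1) → ℝ) → ENNReal, Measurable u →
        ∫⁻ x, u x = ∫⁻ s : ℝ, ∫⁻ y : Fin n → ℝ, u (e.symm (s, y)) := by
      intro u hu
      have := (volume_preserving_piFinSuccAbove (fun _ : Fin (n + 1) => ℝ) 0).symm
      rw [← this.lintegral_comp hu]
      exact lintegral_prod _ (hu.comp e.symm.measurable).aemeasurable
    have hm : ∀ u : (Fin (n + 1) → ℝ) → ENNReal, Measurable u →
      Measurable (fun p => u (e.symm p)) := fun u hu => hu.comp e.symm.measurable
    rw [he f hf, he g hg, he h hh]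
    refine pl_one _ _ _ (hm f hf).lintegral_prod_right' (hm g hg).lintegral_prod_right'
      (hm h hh).lintegral_prod_right' ?_
    intro s t
    refine ih _ _ _ ((hm f hf).comp measurable_prodMk_left) ((hm g hg).comp measurable_prodMk_left)
      ((hm h hh).comp measurable_prodMk_left) ?_
    intro x y
    refine (H _ _).trans (le_of_eq ?_)
    congr 2
    ext i
    refine Fin.cases ?_ (fun j => ?_) i
    · simp [e, MeasurableEquiv.piFinSuccAbove, Fin.insertNthEquiv]; ring
    · simp [e, MeasurableEquiv.piFinSuccAbove, Fin.insertNthEquiv]; ring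

lemma pl_euc (n : ℕ) (f g h : EuclideanSpace ℝ (Fin n) → ENNReal) (hf : Measurable f)
    (hg : Measurable g) (hh : Measurable h)
    (H : ∀ x y, f x * g y ≤ h ((2⁻¹ : ℝ) • (x + y)) ^ 2) :
    (∫⁻ x, f x) * (∫⁻ x, g x) ≤ (∫⁻ x, h x) ^ 2 := by
  have hp := PiLp.volume_preserving_toLp (Fin n)
  rw [← hp.lintegral_comp hf, ← hp.lintegral_comp hg, ← hp.lintegral_comp hh]
  refine pl_pi n _ _ _ (hf.comp hp.measurable) (hg.comp hp.measurable) (hh.comp hp.measurable) ?_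
  intro x y
  exact H _ _

lemma scaled (n : ℕ) (K : Set (EuclideanSpace ℝ (Fin n))) (hK : IsCompact K) (a : ℝ) (ha : 0 < a) :
    ∫⁻ x, ENNReal.ofReal (K.indicator (fun y => Real.exp (-a * ‖y‖ ^ 2)) (a⁻¹ • x)) =
      ENNReal.ofReal (a ^ n * ∫ x in K, Real.exp (-a * ‖x‖ ^ 2)) := by
  have hint : Integrable (K.indicator (fun y => Real.exp (-a * ‖y‖ ^ 2))) := by
    rw [integrable_indicator_iff hK.measurableSet]
    exact ContinuousOn.integrableOn_compact hK (by fun_prop)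
  have h0 : ∀ y, 0 ≤ K.indicator (fun y => Real.exp (-a * ‖y‖ ^ 2)) y :=
    fun y => indicator_nonneg (fun _ _ => (Real.exp_pos _).le) y
  rw [← ofReal_integral_eq_lintegral_ofReal (hint.comp_smul (inv_ne_zero ha.ne'))
    (.of_forall fun x => h0 _), Measure.integral_comp_inv_smul_of_nonneg _ _ ha.le,
    integral_indicator hK.measurableSet]
  simp

/-- Key inequality for the variance of the ratio estimator: for a convex body `K ⊆ ℝⁿ`
and `0 < b < 2a`,
`(∫_K e^{-b‖x‖²})(∫_K e^{-(2a-b)‖x‖²}) ≤ (a²/(b(2a-b)))^{n+1} (∫_K e^{-a‖x‖²})²`. -/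
theorem gaussian_ratio_variance_bound
    (n : ℕ)
    (K : Set (EuclideanSpace ℝ (Fin n)))
    (hKconv : Convex ℝ K) (hKcomp : IsCompact K) (hKne : (interior K).Nonempty)
    (a b : ℝ) (ha : 0 < a) (hb : 0 < b) (hba : b < 2 * a) :
    (∫ x in K, Real.exp (-b * ‖x‖^2)) * (∫ x in K, Real.exp (-(2 * a - b) * ‖x‖^2)) ≤
      (a ^ 2 / (b * (2 * a - b))) ^ (n + 1) * (∫ x in K, Real.exp (-a * ‖x‖^2)) ^ 2 := by
  obtain ⟨c, hc⟩ : ∃ c, c = 2 * a - b := ⟨_, rfl⟩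
  rw [← hc]
  have hc0 : 0 < c := by linarith
  have meas : ∀ t : ℝ, Measurable fun x : EuclideanSpace ℝ (Fin n) =>
      ENNReal.ofReal (K.indicator (fun y => Real.exp (-t * ‖y‖ ^ 2)) (t⁻¹ • x)) := by
    intro t
    have : Measurable (K.indicator (fun y => Real.exp (-t * ‖y‖ ^ 2))) :=
      Measurable.indicator (by fun_prop) hKcomp.measurableSet
    exact (this.comp (measurable_const_smul _)).ennreal_ofReal
  have nn : ∀ (t : ℝ) y, 0 ≤ K.indicator (fun y => Real.exp (-t * ‖y‖ ^ 2)) y :=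
    fun t y => indicator_nonneg (fun _ _ => (Real.exp_pos _).le) y
  have I0 : ∀ t : ℝ, 0 ≤ ∫ x in K, Real.exp (-t * ‖x‖ ^ 2) := fun t =>
    integral_nonneg fun _ => (Real.exp_pos _).le
  have main := pl_euc n _ _ _ (meas b) (meas c) (meas a) (by
    intro x y
    rw [← ENNReal.ofReal_mul (nn _ _), ← ENNReal.ofReal_pow (nn _ _)]
    apply ENNReal.ofReal_le_ofReal
    by_cases hx : b⁻¹ • x ∈ K
    swap
    · rw [indicator_of_notMem hx, zero_mul]; exact sq_nonneg _
    by_cases hy : c⁻¹ • y ∈ K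
    swap
    · rw [indicator_of_notMem hy, mul_zero]; exact sq_nonneg _
    obtain ⟨u, hu⟩ : ∃ u, u = b⁻¹ • x := ⟨_, rfl⟩
    obtain ⟨v, hv⟩ : ∃ v, v = c⁻¹ • y := ⟨_, rfl⟩
    have hx' : x = b • u := by rw [hu, smul_inv_smul₀ hb.ne']
    have hy' : y = c • v := by rw [hv, smul_inv_smul₀ hc0.ne']
    rw [← hu] at hx ⊢
    rw [← hv] at hy ⊢
    have hz : a⁻¹ • (2⁻¹ : ℝ) • (x + y) = (b / (2 * a)) • u + (c / (2 * a)) • v := by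
      rw [hx', hy', smul_add, smul_add, smul_smul, smul_smul, smul_smul, smul_smul]
      congr 2 <;> field_simp
    have hzK : (b / (2 * a)) • u + (c / (2 * a)) • v ∈ K :=
      hKconv hx hy (by positivity) (by positivity) (by field_simp; linarith)
    rw [hz, indicator_of_mem hx, indicator_of_mem hy, indicator_of_mem hzK, ← Real.exp_add,
      ← Real.exp_nat_mul]
    apply Real.exp_le_exp.2
    have hn : ‖(b / (2 * a)) • u + (c / (2 * a)) • v‖ ≤ (b * ‖u‖ + c * ‖v‖) / (2 * a) := by
      refine (norm_add_le _ _).trans (le_of_eq ?_)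
      rw [norm_smul, norm_smul, Real.norm_of_nonneg (by positivity),
        Real.norm_of_nonneg (by positivity)]
      ring
    have hn2 := pow_le_pow_left₀ (norm_nonneg _) hn 2
    have : ((b * ‖u‖ + c * ‖v‖) / (2 * a)) ^ 2 * (2 * a) ≤ b * ‖u‖ ^ 2 + c * ‖v‖ ^ 2 := by
      have h2 : 2 * a = b + c := by linarith
      rw [h2, div_pow, sq (b + c), div_mul_eq_mul_div, div_le_iff₀ (by positivity)]
      have : 0 ≤ (b * c * (b + c)) * (‖u‖ - ‖v‖) ^ 2 := by positivity
      nlinarith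
    push_cast
    nlinarith)
  rw [scaled n K hKcomp b hb, scaled n K hKcomp c hc0, scaled n K hKcomp a ha,
    ← ENNReal.ofReal_mul (mul_nonneg (by positivity) (I0 _)),
    ← ENNReal.ofReal_pow (mul_nonneg (by positivity) (I0 _)),
    ENNReal.ofReal_le_ofReal_iff (sq_nonneg _)] at main
  have h1 : (∫ x in K, Real.exp (-b * ‖x‖^2)) * (∫ x in K, Real.exp (-c * ‖x‖^2)) ≤
      (a ^ 2 / (b * c)) ^ n * (∫ x in K, Real.exp (-a * ‖x‖^2)) ^ 2 := by
    rw [div_pow, div_mul_eq_mul_div, le_div_iff₀ (by positivity), mul_pow b c]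
    calc _ = _ := by ring
      _ ≤ _ := main
      _ = _ := by ring
  refine h1.trans ?_
  gcongr
  · rw [le_div_iff₀ (by positivity)]
    subst hc
    nlinarith [sq_nonneg (a - b)]
  · omega
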